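/- Let h be a bilinear form on an n-dimensional real inner product space (V,g) and let 0 ≤ q ≤ n and 1 ≤ r ≤ n−q. Then: (i) *((h−λg)^{n−r}/(n−r)!) = Σ_{m=0}^{n−r} (−1)^{n−m−r} s_{(r,m)}(h) λ^{n−m−r} for all λ ∈ ℝ (an identity of (r,r)-double forms); (ii) if moreover q+r ≤ n, then ((q+r)!/q!)·s_{q+r}(h) = ⟨s_{(r,q)}(h), h^r⟩; (iii) c(s_{(r,q)}(h)) = (n−q−r+1)·s_{(r−1,q)}(h). -/

import Mathlib

noncomputable section

open Finset

/-- Double forms over an `n`-dimensional real inner product space, described by their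
coefficients in a fixed orthonormal basis: a `(p,q)`-double form corresponds to a function
supported on pairs of subsets of cardinalities `p` and `q`. -/
abbrev DForm (n : ℕ) := Finset (Fin n) → Finset (Fin n) → ℝ

namespace DForm

variable {n : ℕ}

/-- Sign of the shuffle placing the elements of `A` (in increasing order) before
those of `B` (in increasing order). -/
def shuffleSign (A B : Finset (Fin n)) : ℝ :=
  (-1 : ℝ) ^ (∑ x ∈ B, (A.filter fun a => x < a).card)

/-- The exterior product of double forms. -/
def wedge (ω₁ ω₂ : DForm n) : DForm n := fun I J =>
  ∑ A ∈ I.powerset, ∑ B ∈ J.powerset,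
    shuffleSign A (I \ A) * shuffleSign B (J \ B) * ω₁ A B * ω₂ (I \ A) (J \ B)

/-- Exterior powers `ω^k` of a double form. -/
def dpow (ω : DForm n) : ℕ → DForm n
  | 0 => fun I J => if I = ∅ ∧ J = ∅ then 1 else 0
  | k + 1 => wedge ω (dpow ω k)

/-- The double Hodge star operator. -/
def hstar (ω : DForm n) : DForm n := fun I J =>
  shuffleSign Iᶜ I * shuffleSign Jᶜ J * ω Iᶜ Jᶜ

/-- The contraction `c` of double forms. -/
def contr (ω : DForm n) : DForm n := fun I J =>
  ∑ j : Fin n,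
    if j ∈ I ∨ j ∈ J then 0
    else shuffleSign {j} I * shuffleSign {j} J * ω (insert j I) (insert j J)

/-- Iterated contraction `c^k`. -/
def citer (ω : DForm n) : ℕ → DForm n
  | 0 => ω
  | k + 1 => contr (citer ω k)

/-- The inner product of double forms. -/
def dinner (ω₁ ω₂ : DForm n) : ℝ :=
  ∑ I : Finset (Fin n), ∑ J : Finset (Fin n), ω₁ I J * ω₂ I J

/-- The transpose `ω^t` of a double form. -/
def transp (ω : DForm n) : DForm n := fun I J => ω J I

/-- The composition (Greub) product `ω₁ ∘ ω₂` of double forms. -/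
def comp (ω₁ ω₂ : DForm n) : DForm n := fun I J =>
  ∑ K : Finset (Fin n), ω₂ I K * ω₁ K J

/-- The scalar value of a `(0,0)`-double form. -/
def toScalar (ω : DForm n) : ℝ := ω ∅ ∅

/-- The metric, as a `(1,1)`-double form. -/
def gMetric (n : ℕ) : DForm n := fun I J => if I = J ∧ I.card = 1 then 1 else 0

/-- Iterated composition power `ω^{∘r}` of a `(1,1)`-double form, with `ω^{∘0} = g`. -/
def cpow (ω : DForm n) : ℕ → DForm n
  | 0 => gMetric n
  | r + 1 => comp ω (cpow ω r)

/-- The `(1,1)`-double form associated to a bilinear form, given by its matrix in the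
orthonormal basis. -/
def ofMatrix (h : Matrix (Fin n) (Fin n) ℝ) : DForm n := fun I J =>
  ∑ i : Fin n, ∑ j : Fin n, if I = {i} ∧ J = {j} then h i j else 0

/-- `ω` is a `(p,q)`-double form. -/
def IsOfDeg (ω : DForm n) (p q : ℕ) : Prop :=
  ∀ I J : Finset (Fin n), ω I J ≠ 0 → I.card = p ∧ J.card = q

/-- `ω` is a symmetric double form. -/
def IsSym (ω : DForm n) : Prop := ∀ I J, ω I J = ω J I

/-- The sign relating `e_{v 0} ∧ ⋯ ∧ e_{v (p-1)}` to the corresponding increasing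
basis `p`-vector (and `0` if the indices are not pairwise distinct). -/
def tupleSign {p : ℕ} (v : Fin p → Fin n) : ℝ :=
  if Function.Injective v then (((Equiv.Perm.sign (Tuple.sort v)) : ℤ) : ℝ) else 0

/-- Evaluation of a double form on wedges of basis vectors indexed by arbitrary tuples. -/
def evalT (ω : DForm n) {p q : ℕ} (v : Fin p → Fin n) (w : Fin q → Fin n) : ℝ :=
  tupleSign v * tupleSign w * ω (Finset.image v Finset.univ) (Finset.image w Finset.univ)

/-- The first Bianchi identity for a `(2,2)`-double form:
`R(x∧y,z∧t) + R(y∧z,x∧t) + R(z∧x,y∧t) = 0`. -/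
def Bianchi2 (R : DForm n) : Prop :=
  ∀ x y z t : Fin n,
    evalT R ![x, y] ![z, t] + evalT R ![y, z] ![x, t] + evalT R ![z, x] ![y, t] = 0

/-- The first Bianchi identity for a `(p,p)`-double form. -/
def FirstBianchi (ω : DForm n) (p : ℕ) : Prop :=
  ∀ (x : Fin (p + 1) → Fin n) (y : Fin (p - 1) → Fin n),
    ∑ j : Fin (p + 1),
      (-1 : ℝ) ^ (j : ℕ) * evalT ω (x ∘ Fin.succAbove j) (Fin.cons (x j) y) = 0

/-- The characteristic coefficient `s_k(h)` of a bilinear form `h`, defined through the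
characteristic polynomial: `det(h - λ g) = ∑ (-1)^(n-i) s_i(h) λ^(n-i)`. -/
def sInv (h : Matrix (Fin n) (Fin n) ℝ) (k : ℕ) : ℝ :=
  (-1 : ℝ) ^ k * (Matrix.charpoly h).coeff (n - k)

/-- The `k`-th cofactor (Newton) transformation `t_k(h) = (1/(k!(n-1-k)!)) *(g^{n-1-k} h^k)`. -/
def tInv (h : Matrix (Fin n) (Fin n) ℝ) (k : ℕ) : DForm n :=
  ((k.factorial * (n - 1 - k).factorial : ℕ) : ℝ)⁻¹ •
    hstar (wedge (dpow (gMetric n) (n - 1 - k)) (dpow (ofMatrix h) k))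

/-- The `(r,q)`-cofactor `s_{(r,q)}(h) = (1/(q!(n-q-r)!)) *(g^{n-q-r} h^q)`. -/
def sCof (h : Matrix (Fin n) (Fin n) ℝ) (r q : ℕ) : DForm n :=
  ((q.factorial * (n - q - r).factorial : ℕ) : ℝ)⁻¹ •
    hstar (wedge (dpow (gMetric n) (n - q - r)) (dpow (ofMatrix h) q))

end DForm

/-! Double forms are an associative algebra under the exterior product, and any two
`(1,1)`-double forms commute in it. Expanding `(h - λg)^(n-r)` by the binomial theorem and applying
the Hodge star term by term gives (i). Its case `r = 0` expresses `det (h - λg)` through the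
`(0,m)`-cofactors, which identifies these with the characteristic coefficients `s_m(h)`; (ii)
follows because `⟨*a, b⟩` is the coefficient of `ab` in top degree. Finally, up to sign the Hodge
star conjugates contraction into exterior multiplication by `g`, so that contracting a cofactor
only raises the exponent of `g`, which is (iii). -/

namespace DForm

variable {n : ℕ}

section ShuffleSign

theorem shuffleSign_eq_prod (A B : Finset (Fin n)) :
    shuffleSign A B = ∏ b ∈ B, ∏ a ∈ A, if b < a then (-1 : ℝ) else 1 := by
  simp only [shuffleSign, ← prod_pow_eq_pow_sum, prod_ite, prod_const, one_pow, mul_one]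

theorem shuffleSign_union_left {A A' : Finset (Fin n)} (hA : Disjoint A A')
    (B : Finset (Fin n)) :
    shuffleSign (A ∪ A') B = shuffleSign A B * shuffleSign A' B := by
  simp only [shuffleSign_eq_prod, prod_union hA, prod_mul_distrib]

theorem shuffleSign_union_right (A : Finset (Fin n)) {B B' : Finset (Fin n)}
    (hB : Disjoint B B') :
    shuffleSign A (B ∪ B') = shuffleSign A B * shuffleSign A B' := by
  simp only [shuffleSign_eq_prod, prod_union hB]

@[simp]
theorem shuffleSign_empty_left (B : Finset (Fin n)) : shuffleSign ∅ B = 1 := by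
  simp [shuffleSign]

@[simp]
theorem shuffleSign_empty_right (A : Finset (Fin n)) : shuffleSign A ∅ = 1 := by
  simp [shuffleSign]

theorem shuffleSign_comm {A B : Finset (Fin n)} (hAB : Disjoint A B) :
    shuffleSign A B = (-1) ^ (#A * #B) * shuffleSign B A := by
  have sign_const : (-1 : ℝ) ^ (#A * #B) = ∏ _b ∈ B, ∏ _a ∈ A, (-1 : ℝ) := by
    simp only [prod_const, pow_mul]
  rw [sign_const, shuffleSign_eq_prod, shuffleSign_eq_prod, prod_comm (s := A)]
  simp only [← prod_mul_distrib]
  refine prod_congr rfl fun b hb ↦ prod_congr rfl fun a ha ↦ ?_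
  rcases (disjoint_iff_ne.1 hAB a ha b hb).lt_or_gt with hlt | hlt <;> simp [hlt, hlt.not_gt]

/-- The sign in `e_A ∧ e_B = ± e_{A ∪ B}`, with the value `0` when `A` and `B` meet. -/
def wedgeSign (A B : Finset (Fin n)) : ℝ :=
  if Disjoint A B then shuffleSign A B else 0

@[simp]
theorem wedgeSign_empty_right (A : Finset (Fin n)) : wedgeSign A ∅ = 1 := by
  simp [wedgeSign]

theorem wedgeSign_comm (A B : Finset (Fin n)) :
    wedgeSign A B = (-1) ^ (#A * #B) * wedgeSign B A := by
  by_cases hAB : Disjoint A B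
  · simp only [wedgeSign, hAB, hAB.symm, if_true, shuffleSign_comm hAB]
  · simp only [wedgeSign, hAB, disjoint_comm.not.1 hAB, if_false, mul_zero]

theorem wedgeSign_cocycle (A B C : Finset (Fin n)) :
    wedgeSign A B * wedgeSign (A ∪ B) C = wedgeSign B C * wedgeSign A (B ∪ C) := by
  simp only [wedgeSign, disjoint_union_left, disjoint_union_right]
  by_cases hAB : Disjoint A B
  · by_cases hBC : Disjoint B C
    · simp only [hAB, hBC, shuffleSign_union_left hAB, shuffleSign_union_right A hBC, true_and,
        and_true, if_true]
      split_ifs <;> ring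
    · simp [hBC]
  · simp [hAB]

end ShuffleSign

section Basis

/-- The double form `e_A ⊗ e_B`, where `e_A` is the wedge of the basis vectors indexed by `A`
in increasing order. -/
def basisForm (A B : Finset (Fin n)) : DForm n := fun I J ↦ if I = A ∧ J = B then 1 else 0

theorem eq_sum_basisForm (ω : DForm n) :
    ω = ∑ K : Finset (Fin n) × Finset (Fin n), ω K.1 K.2 • basisForm K.1 K.2 := by
  ext I J
  rw [Finset.sum_apply, Finset.sum_apply, sum_eq_single (I, J)]
  · simp [basisForm]
  · rintro ⟨A, B⟩ - hne
    have : ¬ (I = A ∧ J = B) := by rintro ⟨rfl, rfl⟩; exact hne rfl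
    simp [basisForm, this]
  · simp

theorem basisForm_induction {P : DForm n → Prop} (ω : DForm n)
    (basisForm : ∀ A B, P (basisForm A B)) (add : ∀ a b, P a → P b → P (a + b))
    (smul : ∀ (t : ℝ) a, P a → P (t • a)) : P ω := by
  have zero : P 0 := by simpa using smul 0 _ (basisForm ∅ ∅)
  rw [eq_sum_basisForm ω]
  exact sum_induction _ P add zero fun K _ ↦ smul _ _ (basisForm K.1 K.2)

theorem ofMatrix_eq_sum (h : Matrix (Fin n) (Fin n) ℝ) :
    ofMatrix h = ∑ i, ∑ j, h i j • basisForm {i} {j} := by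
  ext I J
  simp [ofMatrix, basisForm, Finset.sum_apply]

theorem ofMatrix_one : ofMatrix (1 : Matrix (Fin n) (Fin n) ℝ) = gMetric n := by
  ext I J
  simp only [ofMatrix_eq_sum, Matrix.one_apply, ite_smul, one_smul, zero_smul, sum_ite_eq, mem_univ,
    if_true, Finset.sum_apply, basisForm, gMetric]
  by_cases hI : #I = 1
  · obtain ⟨i, rfl⟩ := card_eq_one.1 hI
    simp [ite_and, eq_comm]
  · have ne_singleton (i : Fin n) : I ≠ {i} := by rintro rfl; simp at hI
    simp [ne_singleton, hI]

theorem ofMatrix_sub_smul_one (h : Matrix (Fin n) (Fin n) ℝ) (t : ℝ) :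
    ofMatrix (h - t • 1) = ofMatrix h + (-t) • gMetric n := by
  simp only [← ofMatrix_one, ofMatrix_eq_sum, smul_sum, ← sum_add_distrib, smul_smul, ← add_smul,
    Matrix.sub_apply, Matrix.smul_apply, smul_eq_mul, neg_mul, ← sub_eq_add_neg]

end Basis

section Wedge

/-- The exterior product as a bilinear map, which embeds the algebra of double forms into its
endomorphism algebra. -/
def wedgeLeft : DForm n →ₗ[ℝ] Module.End ℝ (DForm n) :=
  LinearMap.mk₂ ℝ wedge
    (fun a b c ↦ by
      ext I J
      simp only [wedge, Pi.add_apply, mul_add, add_mul, sum_add_distrib])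
    (fun t a b ↦ by
      ext I J
      simp only [wedge, Pi.smul_apply, smul_eq_mul, mul_sum, mul_assoc, mul_left_comm t])
    (fun a b c ↦ by
      ext I J
      simp only [wedge, Pi.add_apply, mul_add, sum_add_distrib])
    (fun t a b ↦ by
      ext I J
      simp only [wedge, Pi.smul_apply, smul_eq_mul, mul_sum, mul_left_comm t])

theorem wedgeLeft_apply (a b : DForm n) : wedgeLeft a b = wedge a b := rfl

theorem add_wedge (a b c : DForm n) : wedge (a + b) c = wedge a c + wedge b c :=
  wedgeLeft.map_add₂ a b c

theorem wedge_add (a b c : DForm n) : wedge a (b + c) = wedge a b + wedge a c :=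
  (wedgeLeft a).map_add b c

theorem smul_wedge (t : ℝ) (a b : DForm n) : wedge (t • a) b = t • wedge a b :=
  wedgeLeft.map_smul₂ t a b

theorem wedge_smul (t : ℝ) (a b : DForm n) : wedge a (t • b) = t • wedge a b :=
  (wedgeLeft a).map_smul t b

theorem wedge_eq_sum (a b : DForm n) :
    wedge a b = ∑ K : Finset (Fin n) × Finset (Fin n), ∑ L : Finset (Fin n) × Finset (Fin n),
      (a K.1 K.2 * b L.1 L.2) • wedge (basisForm K.1 K.2) (basisForm L.1 L.2) := by
  conv_lhs => rw [← wedgeLeft_apply, eq_sum_basisForm a, eq_sum_basisForm b]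
  simp only [map_sum, LinearMap.sum_apply, map_smul, LinearMap.smul_apply, smul_sum, smul_smul]
  rw [sum_comm]
  simp only [mul_comm, wedgeLeft_apply]

theorem basisForm_wedge (A B : Finset (Fin n)) (ω : DForm n) (I J : Finset (Fin n)) :
    wedge (basisForm A B) ω I J = if A ⊆ I ∧ B ⊆ J then
      shuffleSign A (I \ A) * shuffleSign B (J \ B) * ω (I \ A) (J \ B) else 0 := by
  simp [wedge, basisForm, ite_and]

theorem ite_shuffleSign_sdiff (A B I : Finset (Fin n)) :
    (if A ⊆ I ∧ I \ A = B then shuffleSign A (I \ A) else 0) =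
      if I = A ∪ B then wedgeSign A B else 0 := by
  by_cases hI : A ⊆ I ∧ I \ A = B
  · obtain ⟨hAI, rfl⟩ := hI
    simp [wedgeSign, disjoint_sdiff, hAI]
  · rw [if_neg hI]
    by_cases hAB : Disjoint A B
    · have : I ≠ A ∪ B := by
        rintro rfl
        exact hI ⟨subset_union_left, union_sdiff_cancel_left hAB⟩
      rw [if_neg this]
    · simp [wedgeSign, hAB]

theorem basisForm_wedge_basisForm (A B C D : Finset (Fin n)) :
    wedge (basisForm A B) (basisForm C D) =
      (wedgeSign A C * wedgeSign B D) • basisForm (A ∪ C) (B ∪ D) := by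
  ext I J
  calc
    _ = (if A ⊆ I ∧ I \ A = C then shuffleSign A (I \ A) else 0) *
          (if B ⊆ J ∧ J \ B = D then shuffleSign B (J \ B) else 0) := by
      rw [ite_zero_mul_ite_zero, basisForm_wedge]
      simp only [basisForm, mul_ite, mul_one, mul_zero, ← ite_and, and_and_and_comm]
    _ = _ := by
      rw [ite_shuffleSign_sdiff, ite_shuffleSign_sdiff, ite_zero_mul_ite_zero]
      simp only [basisForm, Pi.smul_apply, smul_eq_mul, mul_ite, mul_one, mul_zero]

theorem wedge_assoc (a b c : DForm n) : wedge (wedge a b) c = wedge a (wedge b c) := by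
  induction a using basisForm_induction with
  | add x y hx hy => simp only [add_wedge, hx, hy]
  | smul t x hx => simp only [smul_wedge, hx]
  | basisForm A A' =>
    induction b using basisForm_induction with
    | add x y hx hy => simp only [add_wedge, wedge_add, hx, hy]
    | smul t x hx => simp only [smul_wedge, wedge_smul, hx]
    | basisForm B B' =>
      induction c using basisForm_induction with
      | add x y hx hy => simp only [wedge_add, hx, hy]
      | smul t x hx => simp only [wedge_smul, hx]
      | basisForm C C' =>
        simp only [basisForm_wedge_basisForm, smul_wedge, wedge_smul, smul_smul, union_assoc]
        rw [mul_mul_mul_comm, wedgeSign_cocycle A B C, wedgeSign_cocycle A' B' C',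
          mul_mul_mul_comm]

theorem wedge_basisForm_empty (ω : DForm n) : wedge ω (basisForm ∅ ∅) = ω := by
  induction ω using basisForm_induction with
  | add x y hx hy => rw [add_wedge, hx, hy]
  | smul t x hx => rw [smul_wedge, hx]
  | basisForm A B => simp [basisForm_wedge_basisForm]

theorem basisForm_empty_wedge (ω : DForm n) : wedge (basisForm ∅ ∅) ω = ω := by
  ext I J
  simp [basisForm_wedge]

theorem wedgeLeft_injective : Function.Injective (wedgeLeft (n := n)) := fun a b hab ↦ by
  simpa [wedgeLeft_apply, wedge_basisForm_empty] using congr($hab (basisForm ∅ ∅))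

theorem wedgeLeft_wedge (a b : DForm n) :
    wedgeLeft (wedge a b) = wedgeLeft a * wedgeLeft b :=
  LinearMap.ext (wedge_assoc a b)

theorem basisForm_wedge_comm (A B C D : Finset (Fin n)) :
    wedge (basisForm A B) (basisForm C D) =
      (-1 : ℝ) ^ (#A * #C + #B * #D) • wedge (basisForm C D) (basisForm A B) := by
  rw [basisForm_wedge_basisForm, basisForm_wedge_basisForm, wedgeSign_comm A C,
    wedgeSign_comm B D, union_comm A C, union_comm B D, smul_smul, pow_add, mul_mul_mul_comm]

theorem IsOfDeg.wedge_comm {a b : DForm n} {p q r s : ℕ} (ha : IsOfDeg a p q)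
    (hb : IsOfDeg b r s) : wedge a b = (-1 : ℝ) ^ (p * r + q * s) • wedge b a := by
  rw [wedge_eq_sum a b, wedge_eq_sum b a, sum_comm, smul_sum]
  refine sum_congr rfl fun L _ ↦ ?_
  rw [smul_sum]
  refine sum_congr rfl fun K _ ↦ ?_
  by_cases haK : a K.1 K.2 = 0
  · simp [haK]
  by_cases hbL : b L.1 L.2 = 0
  · simp [hbL]
  rw [basisForm_wedge_comm, (ha _ _ haK).1, (ha _ _ haK).2, (hb _ _ hbL).1, (hb _ _ hbL).2,
    smul_comm, mul_comm (a _ _)]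

theorem ofMatrix_wedge (h : Matrix (Fin n) (Fin n) ℝ) (ω : DForm n) (I J : Finset (Fin n)) :
    wedge (ofMatrix h) ω I J = ∑ i ∈ I, ∑ j ∈ J,
      h i j * (shuffleSign {i} (I.erase i) * shuffleSign {j} (J.erase j) *
        ω (I.erase i) (J.erase j)) := by
  rw [← wedgeLeft_apply, ofMatrix_eq_sum]
  simp only [map_sum, map_smul, LinearMap.sum_apply, LinearMap.smul_apply, wedgeLeft_apply,
    Finset.sum_apply, Pi.smul_apply, smul_eq_mul, basisForm_wedge, singleton_subset_iff,
    sdiff_singleton_eq_erase, ite_and, mul_ite, mul_zero, sum_ite_irrel, sum_const_zero,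
    sum_ite_mem, univ_inter]

theorem gMetric_wedge (ω : DForm n) (I J : Finset (Fin n)) :
    wedge (gMetric n) ω I J = ∑ i ∈ I ∩ J,
      shuffleSign {i} (I.erase i) * shuffleSign {i} (J.erase i) * ω (I.erase i) (J.erase i) := by
  simp only [← ofMatrix_one, ofMatrix_wedge, Matrix.one_apply, ite_mul, one_mul, zero_mul,
    sum_ite_eq, sum_ite_mem]

end Wedge

section Degree

theorem isOfDeg_ofMatrix (h : Matrix (Fin n) (Fin n) ℝ) : IsOfDeg (ofMatrix h) 1 1 := by
  intro I J hIJ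
  obtain ⟨i, -, hi⟩ := exists_ne_zero_of_sum_ne_zero hIJ
  obtain ⟨j, -, hj⟩ := exists_ne_zero_of_sum_ne_zero hi
  obtain ⟨rfl, rfl⟩ := (ite_ne_right_iff.1 hj).1
  simp

theorem isOfDeg_gMetric : IsOfDeg (gMetric n) 1 1 :=
  ofMatrix_one (n := n) ▸ isOfDeg_ofMatrix 1

theorem IsOfDeg.wedge {a b : DForm n} {p q r s : ℕ} (ha : IsOfDeg a p q) (hb : IsOfDeg b r s) :
    IsOfDeg (wedge a b) (p + r) (q + s) := by
  intro I J hIJ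
  obtain ⟨A, hA, hAJ⟩ := exists_ne_zero_of_sum_ne_zero hIJ
  obtain ⟨B, hB, hAB⟩ := exists_ne_zero_of_sum_ne_zero hAJ
  have haAB := ha _ _ (right_ne_zero_of_mul (left_ne_zero_of_mul hAB))
  have hbAB := hb _ _ (right_ne_zero_of_mul hAB)
  have cardI := card_sdiff_add_card_eq_card (mem_powerset.1 hA)
  have cardJ := card_sdiff_add_card_eq_card (mem_powerset.1 hB)
  omega

theorem IsOfDeg.dpow {a : DForm n} {p q : ℕ} (ha : IsOfDeg a p q) (k : ℕ) :
    IsOfDeg (dpow a k) (k * p) (k * q) := by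
  induction k with
  | zero =>
    intro I J hIJ
    obtain ⟨rfl, rfl⟩ := (ite_ne_right_iff.1 hIJ).1
    simp
  | succ k ih =>
    rw [add_one_mul, add_one_mul, add_comm _ p, add_comm _ q]
    exact ha.wedge ih

end Degree

section Power

theorem dpow_zero (a : DForm n) : dpow a 0 = basisForm ∅ ∅ := rfl

theorem dpow_succ (a : DForm n) (k : ℕ) : dpow a (k + 1) = wedge a (dpow a k) := rfl

theorem wedgeLeft_dpow (a : DForm n) (k : ℕ) : wedgeLeft (dpow a k) = wedgeLeft a ^ k := by
  induction k with
  | zero => exact LinearMap.ext basisForm_empty_wedge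
  | succ k ih => rw [dpow_succ, wedgeLeft_wedge, ih, pow_succ']

theorem dpow_add (a : DForm n) (k l : ℕ) : dpow a (k + l) = wedge (dpow a k) (dpow a l) :=
  wedgeLeft_injective <| by simp only [wedgeLeft_wedge, wedgeLeft_dpow, pow_add]

theorem smul_dpow (t : ℝ) (a : DForm n) (k : ℕ) : dpow (t • a) k = t ^ k • dpow a k :=
  wedgeLeft_injective <| by simp only [wedgeLeft_dpow, map_smul, smul_pow]

theorem add_dpow {a b : DForm n} (hab : wedge a b = wedge b a) (k : ℕ) :
    dpow (a + b) k =
      ∑ m ∈ range (k + 1), (k.choose m : ℝ) • wedge (dpow b (k - m)) (dpow a m) := by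
  have comm : Commute (wedgeLeft a) (wedgeLeft b) := by
    rw [Commute, SemiconjBy, ← wedgeLeft_wedge, hab, wedgeLeft_wedge]
  refine wedgeLeft_injective ?_
  simp only [wedgeLeft_dpow, map_add, map_sum, map_smul, wedgeLeft_wedge, comm.add_pow]
  refine sum_congr rfl fun m _ ↦ ?_
  rw [(comm.pow_pow _ _).eq, ← Nat.cast_comm, ← nsmul_eq_mul, Nat.cast_smul_eq_nsmul]

theorem ofMatrix_wedge_gMetric_comm (h : Matrix (Fin n) (Fin n) ℝ) :
    wedge (ofMatrix h) (gMetric n) = wedge (gMetric n) (ofMatrix h) := by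
  simpa using (isOfDeg_ofMatrix h).wedge_comm isOfDeg_gMetric

theorem dpow_ofMatrix_sub_smul_one (h : Matrix (Fin n) (Fin n) ℝ) (t : ℝ) (k : ℕ) :
    dpow (ofMatrix (h - t • 1)) k = ∑ m ∈ range (k + 1),
      (k.choose m * (-t) ^ (k - m)) • wedge (dpow (gMetric n) (k - m)) (dpow (ofMatrix h) m) := by
  have comm : wedge (ofMatrix h) ((-t) • gMetric n) = wedge ((-t) • gMetric n) (ofMatrix h) := by
    rw [wedge_smul, smul_wedge, ofMatrix_wedge_gMetric_comm]
  simp only [ofMatrix_sub_smul_one, add_dpow comm, smul_dpow, smul_wedge, smul_smul]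

end Power

section Determinant

theorem shuffleSign_singleton_left (a : Fin n) (B : Finset (Fin n)) :
    shuffleSign {a} B = (-1) ^ #{b ∈ B | b < a} := by
  simp only [shuffleSign, filter_singleton, apply_ite card, card_singleton, card_empty,
    card_filter]

theorem erase_map_univ_orderEmb {k : ℕ} (u : Fin (k + 1) ↪o Fin n) (p : Fin (k + 1)) :
    (univ.map u.toEmbedding).erase (u p) =
      univ.map ((Fin.succAboveOrderEmb p).trans u).toEmbedding := by
  have erase_univ : univ.erase p = univ.map (Fin.succAboveOrderEmb p).toEmbedding := by
    ext x
    rw [mem_erase, and_iff_left (mem_univ x), mem_map, ← Fin.exists_succAbove_eq_iff]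
    simp only [mem_univ, true_and]
    rfl
  rw [← RelEmbedding.coe_toEmbedding, ← map_erase, erase_univ, map_map]
  rfl

theorem shuffleSign_singleton_map_succAbove {k : ℕ} (u : Fin (k + 1) ↪o Fin n)
    (p : Fin (k + 1)) :
    shuffleSign {u p} (univ.map ((Fin.succAboveOrderEmb p).trans u).toEmbedding) =
      (-1) ^ (p : ℕ) := by
  rw [← erase_map_univ_orderEmb, shuffleSign_singleton_left]
  congr 1
  calc
    _ = #((Iio p).map u.toEmbedding) := by
      congr 1
      ext x
      simp only [mem_filter, mem_erase, mem_map, mem_univ, true_and, mem_Iio,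
        RelEmbedding.coe_toEmbedding]
      constructor
      · rintro ⟨⟨-, i, rfl⟩, hlt⟩
        exact ⟨i, u.lt_iff_lt.1 hlt, rfl⟩
      · rintro ⟨i, hip, rfl⟩
        have hlt := u.lt_iff_lt.2 hip
        exact ⟨⟨hlt.ne, i, rfl⟩, hlt⟩
    _ = p := by rw [card_map, Fin.card_Iio]

theorem dpow_ofMatrix_map (h : Matrix (Fin n) (Fin n) ℝ) {k : ℕ} (u v : Fin k ↪o Fin n) :
    dpow (ofMatrix h) k (univ.map u.toEmbedding) (univ.map v.toEmbedding) =
      k.factorial * (h.submatrix u v).det := by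
  induction k with
  | zero => simp [dpow_zero, basisForm]
  | succ k ih =>
    have coe_succAbove (p : Fin (k + 1)) : ⇑(Fin.succAboveOrderEmb p) = p.succAbove := rfl
    have row_expansion (p : Fin (k + 1)) :
        ∑ l, h (u p) (v l) * ((-1) ^ (p : ℕ) * (-1) ^ (l : ℕ) *
            (k.factorial * (h.submatrix ((Fin.succAboveOrderEmb p).trans u)
              ((Fin.succAboveOrderEmb l).trans v)).det)) =
          k.factorial * (h.submatrix u v).det := by
      simp only [Matrix.det_succ_row _ p, mul_sum, Matrix.submatrix_submatrix,
        Matrix.submatrix_apply, pow_add, RelEmbedding.coe_trans, coe_succAbove]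
      exact sum_congr rfl fun l _ ↦ by ring
    rw [dpow_succ, ofMatrix_wedge]
    simp only [sum_map, RelEmbedding.coe_toEmbedding, erase_map_univ_orderEmb,
      shuffleSign_singleton_map_succAbove, ih, row_expansion, sum_const, card_univ,
      Fintype.card_fin, nsmul_eq_mul]
    rw [Nat.factorial_succ, Nat.cast_mul, mul_assoc]

theorem dpow_ofMatrix_univ (h : Matrix (Fin n) (Fin n) ℝ) :
    dpow (ofMatrix h) n univ univ = n.factorial * h.det := by
  simpa using dpow_ofMatrix_map h (RelEmbedding.refl _) (RelEmbedding.refl _)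

end Determinant

section Hodge

theorem hstar_smul (t : ℝ) (ω : DForm n) : hstar (t • ω) = t • hstar ω := by
  ext I J
  simp only [hstar, Pi.smul_apply, smul_eq_mul, mul_left_comm]

theorem hstar_sum {ι : Type*} (s : Finset ι) (f : ι → DForm n) :
    hstar (∑ i ∈ s, f i) = ∑ i ∈ s, hstar (f i) := by
  ext I J
  simp only [hstar, Finset.sum_apply, mul_sum]

theorem hstar_empty (ω : DForm n) : hstar ω ∅ ∅ = ω univ univ := by
  simp [hstar]

theorem dinner_smul_left (t : ℝ) (a b : DForm n) : dinner (t • a) b = t * dinner a b := by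
  simp only [dinner, Pi.smul_apply, smul_eq_mul, mul_sum, mul_assoc]

theorem dinner_hstar_left (a b : DForm n) : dinner (hstar a) b = wedge a b univ univ := by
  have sum_compl (f : Finset (Fin n) → ℝ) : ∑ A, f Aᶜ = ∑ A, f A :=
    Equiv.sum_comp compl_involutive.toPerm f
  simp only [dinner, wedge, powerset_univ, ← compl_eq_univ_sdiff, hstar]
  rw [← sum_compl]
  refine sum_congr rfl fun A _ ↦ ?_
  rw [← sum_compl]
  simp only [compl_compl]

theorem contr_smul (t : ℝ) (ω : DForm n) : contr (t • ω) = t • contr ω := by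
  ext I J
  simp only [contr, Pi.smul_apply, smul_eq_mul, mul_sum, mul_ite, mul_zero, mul_left_comm t]

theorem contr_apply (ω : DForm n) (I J : Finset (Fin n)) :
    contr ω I J = ∑ j ∈ Iᶜ ∩ Jᶜ,
      shuffleSign {j} I * shuffleSign {j} J * ω (insert j I) (insert j J) := by
  have mem_iff (j : Fin n) : j ∈ Iᶜ ∩ Jᶜ ↔ ¬ (j ∈ I ∨ j ∈ J) := by simp
  simp only [contr, ← ite_not (p := _ ∨ _), ← mem_iff, sum_ite_mem, univ_inter]

theorem shuffleSign_compl_insert {j : Fin n} {K : Finset (Fin n)} (hj : j ∉ K) :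
    shuffleSign {j} K * shuffleSign (insert j K)ᶜ (insert j K) =
      (-1) ^ #(insert j K)ᶜ * (shuffleSign Kᶜ K * shuffleSign {j} (insert j K)ᶜ) := by
  have disj : Disjoint (insert j K)ᶜ {j} := by simp
  have compl_eq : Kᶜ = (insert j K)ᶜ ∪ {j} := by
    rw [union_comm, ← insert_eq, insert_compl_insert hj]
  have sign_insert : shuffleSign (insert j K)ᶜ (insert j K) =
      (-1) ^ #(insert j K)ᶜ * shuffleSign {j} (insert j K)ᶜ * shuffleSign (insert j K)ᶜ K := by
    rw [insert_eq j K, shuffleSign_union_right _ (by simpa using hj), ← insert_eq,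
      shuffleSign_comm disj, card_singleton, mul_one]
  rw [sign_insert, compl_eq, shuffleSign_union_left disj]
  ring

theorem IsOfDeg.contr_hstar {ω : DForm n} {p q : ℕ} (hω : IsOfDeg ω p q) :
    contr (hstar ω) = (-1 : ℝ) ^ (p + q) • hstar (DForm.wedge (gMetric n) ω) := by
  ext I J
  simp only [contr_apply, hstar, Pi.smul_apply, smul_eq_mul, gMetric_wedge, mul_sum]
  refine sum_congr rfl fun j hj ↦ ?_
  simp only [mem_inter, mem_compl] at hj
  simp only [← compl_insert]
  by_cases hIJ : ω (insert j I)ᶜ (insert j J)ᶜ = 0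
  · simp only [hIJ, mul_zero]
  have signI := shuffleSign_compl_insert hj.1
  have signJ := shuffleSign_compl_insert hj.2
  rw [(hω _ _ hIJ).1] at signI
  rw [(hω _ _ hIJ).2] at signJ
  calc
    _ = (shuffleSign {j} I * shuffleSign (insert j I)ᶜ (insert j I)) *
          (shuffleSign {j} J * shuffleSign (insert j J)ᶜ (insert j J)) *
          ω (insert j I)ᶜ (insert j J)ᶜ := by ring
    _ = _ := by rw [signI, signJ, pow_add]; ring

end Hodge

section Cofactor

theorem hstar_dpow_sub_smul_one (h : Matrix (Fin n) (Fin n) ℝ) (r : ℕ) (t : ℝ) :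
    ((n - r).factorial : ℝ)⁻¹ • hstar (dpow (ofMatrix (h - t • 1)) (n - r)) =
      ∑ m ∈ range (n - r + 1), ((-1) ^ (n - m - r) * t ^ (n - m - r)) • sCof h r m := by
  rw [dpow_ofMatrix_sub_smul_one, hstar_sum, smul_sum]
  refine sum_congr rfl fun m hm ↦ ?_
  rw [hstar_smul, sCof, smul_smul, smul_smul, Nat.sub_right_comm n m r, ← mul_pow, neg_one_mul,
    Nat.cast_choose ℝ (mem_range_succ_iff.1 hm), Nat.cast_mul]
  congr 1
  field_simp

theorem det_sub_smul_one (h : Matrix (Fin n) (Fin n) ℝ) (t : ℝ) :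
    (h - t • 1).det = ∑ m ∈ range (n + 1), (-1) ^ (n - m) * t ^ (n - m) * sCof h 0 m ∅ ∅ := by
  have expansion := congr($(hstar_dpow_sub_smul_one h 0 t) ∅ ∅)
  simpa [Finset.sum_apply, hstar_empty, dpow_ofMatrix_univ, Nat.factorial_ne_zero] using expansion

theorem charpoly_eq_sum_sCof (h : Matrix (Fin n) (Fin n) ℝ) :
    h.charpoly = ∑ m ∈ range (n + 1),
      Polynomial.C ((-1) ^ m * sCof h 0 m ∅ ∅) * Polynomial.X ^ (n - m) := by
  refine Polynomial.funext fun t ↦ ?_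
  have scalar_sub : Matrix.scalar (Fin n) t - h = -(h - t • 1) := by
    rw [neg_sub, Matrix.smul_one_eq_diagonal, Matrix.scalar_apply]
  rw [Matrix.eval_charpoly, scalar_sub, Matrix.det_neg, det_sub_smul_one, Fintype.card_fin,
    Polynomial.eval_finsetSum, mul_sum]
  refine sum_congr rfl fun m hm ↦ ?_
  have sign : (-1 : ℝ) ^ n * (-1) ^ (n - m) = (-1) ^ m := by
    conv_lhs => rw [← Nat.add_sub_cancel' (mem_range_succ_iff.1 hm), pow_add]
    rw [Nat.add_sub_cancel_left, mul_assoc, ← mul_pow, neg_one_mul, neg_neg, one_pow, mul_one]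
  simp only [Polynomial.eval_mul, Polynomial.eval_C, Polynomial.eval_pow, Polynomial.eval_X,
    ← sign]
  ring

theorem sInv_eq_sCof_zero (h : Matrix (Fin n) (Fin n) ℝ) {k : ℕ} (hk : k ≤ n) :
    sInv h k = sCof h 0 k ∅ ∅ := by
  have coeff_eq : h.charpoly.coeff (n - k) = (-1) ^ k * sCof h 0 k ∅ ∅ := by
    rw [charpoly_eq_sum_sCof, Polynomial.finsetSum_coeff, sum_eq_single k]
    · exact Polynomial.coeff_C_mul_X_pow .. |>.trans (if_pos rfl)
    · intro m hm hmk
      rw [mem_range_succ_iff] at hm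
      rw [Polynomial.coeff_C_mul_X_pow, if_neg (by omega)]
    · simp [hk]
  rw [sInv, coeff_eq, ← mul_assoc, ← mul_pow, neg_one_mul, neg_neg, one_pow, one_mul]

theorem dinner_sCof_dpow (h : Matrix (Fin n) (Fin n) ℝ) {q r : ℕ} (hqr : q + r ≤ n) :
    dinner (sCof h r q) (dpow (ofMatrix h) r) =
      (q + r).factorial / q.factorial * sInv h (q + r) := by
  rw [sInv_eq_sCof_zero h hqr, sCof, sCof, dinner_smul_left, dinner_hstar_left, wedge_assoc,
    ← dpow_add, Pi.smul_apply, Pi.smul_apply, hstar_empty, smul_eq_mul, Nat.sub_zero,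
    ← Nat.sub_sub]
  push_cast
  field_simp

theorem contr_sCof_succ (h : Matrix (Fin n) (Fin n) ℝ) {q r : ℕ} (hqr : q + r < n) :
    contr (sCof h (r + 1) q) = ((n - q - r : ℕ) : ℝ) • sCof h r q := by
  have deg := (isOfDeg_gMetric.dpow (n - q - (r + 1))).wedge ((isOfDeg_ofMatrix h).dpow q)
  obtain ⟨d, hd⟩ : ∃ d, n - q - (r + 1) = d := ⟨_, rfl⟩
  have hd' : n - q - r = d + 1 := by omega
  rw [sCof, sCof, contr_smul, deg.contr_hstar, Even.neg_one_pow ⟨_, rfl⟩, one_smul,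
    ← wedge_assoc, ← dpow_succ, smul_smul, hd, hd', Nat.factorial_succ]
  congr 1
  push_cast
  field_simp

end Cofactor

end DForm

open DForm in
/-- For `0 ≤ q ≤ n` and `1 ≤ r ≤ n-q`:
(i) the `(r,m)`-cofactors are the coefficients of `*((h-λg)^{n-r}/(n-r)!)`,
(ii) the general Laplace expansion `((q+r)!/q!) s_{q+r}(h) = ⟨s_{(r,q)}(h), h^r⟩`,
(iii) the general Newton identity `c s_{(r,q)}(h) = (n-q-r+1) s_{(r-1,q)}(h)`. -/
theorem statement8 (n : ℕ) (h : Matrix (Fin n) (Fin n) ℝ) (q r : ℕ)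
    (hq : q ≤ n) (hr1 : 1 ≤ r) (hr2 : r + q ≤ n) :
    (∀ lam : ℝ,
      (((n - r).factorial : ℕ) : ℝ)⁻¹ • hstar (dpow (ofMatrix (h - lam • 1)) (n - r)) =
        ∑ m ∈ Finset.range (n - r + 1),
          ((-1 : ℝ) ^ (n - m - r) * lam ^ (n - m - r)) • sCof h r m) ∧
    (((q + r).factorial : ℝ) / (q.factorial : ℝ)) * sInv h (q + r) =
      dinner (sCof h r q) (dpow (ofMatrix h) r) ∧
    contr (sCof h r q) = ((n - q - r + 1 : ℕ) : ℝ) • sCof h (r - 1) q := by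
  refine ⟨hstar_dpow_sub_smul_one h r, (dinner_sCof_dpow h (by omega)).symm, ?_⟩
  obtain ⟨s, rfl⟩ := Nat.exists_eq_add_of_le' hr1
  have codegree : n - q - (s + 1) + 1 = n - q - s := by omega
  rw [codegree, Nat.add_sub_cancel]
  exact contr_sCof_succ h (by omega)
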